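/- Let (V, w, d) be a finite weighted metric space, X ⊆ V nonempty, and k ≥ 1 an integer. Define the k-means cost cost(S, X) = ∑_{x∈X} w(x)·(min_{y∈S} d(x,y))² for nonempty S ⊆ V, and OPT_k(X) := min over S ⊆ X with |S| = k of cost(S, X). Let R ⊆ X with m := |R| satisfying 2k + 1 ≤ m ≤ 4k, and let 0 < ε < 1. Then there exists a subset S ⊆ R with |S| = 2k such that cost(S, X) ≤ (1 + 3ε/k)^{m − 2k} · cost(R, X) + ( ((1 + 3ε/k)^{m − 2k} − 1) / (3ε/k) ) · ((4 + 2/ε)/k) · OPT_k(X). -/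

import Mathlib

/-!
The bound follows by iterating a one-step estimate: if `S` has more than `2k` points, some `c ∈ S`
can be removed with `cost(S \ {c}) ≤ (1 + 3ε/k) cost(S) + ((4 + 2/ε)/k) OPT`
(`exists_erase_kCost2_le`).

For the one-step estimate, let `O` be an optimal set of `k` centers, and let `T ⊆ S` consist of a
nearest point in `S` for each `o ∈ O`, so that `|S \ T| ≥ k`. When `c ∈ S \ T` is removed, a point
`x` served by `c` can be rerouted to the point of `T` assigned to the center `o ∈ O` nearest to `x`.
By the triangle inequality its new distance is at most `2 d(x, O) + d(x, S)`, and Young's inequality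
turns this into an increase of the squared distance of at most
`(4 + 2/ε) d(x, O)² + 2ε d(x, S)²`. The clusters of distinct `c` are disjoint, so these increases
sum to at most `(4 + 2/ε) OPT + 2ε cost(S)` over all `c ∈ S \ T`, and the cheapest removal costs at
most a `1/k` fraction of that. Unrolling the recursion gives the geometric sum in the theorem.
-/

open Finset

/-- Distance from a point to a (nonempty) finite set: `min_{y ∈ S} d(x,y)`. -/
noncomputable def distToSet {V : Type*} [MetricSpace V] (x : V) (S : Finset V) : ℝ :=
  sInf ((fun y => dist x y) '' ↑S)

/-- `k`-means cost of a center set `S` with respect to the point set `U`: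
`∑_{x ∈ U} w(x) · d(x, S)²`. -/
noncomputable def kCost2 {V : Type*} [MetricSpace V] (w : V → NNReal) (S U : Finset V) : ℝ :=
  ∑ x ∈ U, (w x : ℝ) * (distToSet x S) ^ 2

/-- `OPT_k(U, X)` for `k`-means: minimum over `S ⊆ X` with `|S| = k` of `kCost2 w S U`. -/
noncomputable def kOPT2 {V : Type*} [MetricSpace V] (w : V → NNReal) (k : ℕ) (U X : Finset V) : ℝ :=
  sInf {c : ℝ | ∃ S : Finset V, S ⊆ X ∧ S.card = k ∧ c = kCost2 w S U}

lemma distToSet_le {V : Type*} [MetricSpace V] (x : V) {S : Finset V} {y : V} (hy : y ∈ S) :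
    distToSet x S ≤ dist x y :=
  csInf_le (S.finite_toSet.image _).bddBelow ⟨y, hy, rfl⟩

lemma exists_dist_eq_distToSet {V : Type*} [MetricSpace V] (x : V) {S : Finset V}
    (hS : S.Nonempty) : ∃ y ∈ S, dist x y = distToSet x S :=
  (Set.Nonempty.image _ hS).csInf_mem (S.finite_toSet.image (fun y => dist x y))

lemma distToSet_nonneg {V : Type*} [MetricSpace V] (x : V) (S : Finset V) :
    0 ≤ distToSet x S := by
  apply Real.sInf_nonneg
  rintro _ ⟨y, _, rfl⟩
  exact dist_nonneg

lemma kCost2_nonneg {V : Type*} [MetricSpace V] (w : V → NNReal) (S U : Finset V) :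
    0 ≤ kCost2 w S U :=
  Finset.sum_nonneg fun x _ => mul_nonneg (w x).2 (sq_nonneg _)

/-- The minimum defining `kOPT2` is attained as soon as `X` has at least `k` points. -/
lemma exists_kCost2_eq_kOPT2 {V : Type*} [MetricSpace V] (w : V → NNReal) (k : ℕ)
    (U X : Finset V) (hk : k ≤ X.card) :
    ∃ O : Finset V, O ⊆ X ∧ O.card = k ∧ kOPT2 w k U X = kCost2 w O U := by
  have hfin : {c : ℝ | ∃ S : Finset V, S ⊆ X ∧ S.card = k ∧ c = kCost2 w S U}.Finite := by
    refine (X.powerset.finite_toSet.image fun S => kCost2 w S U).subset ?_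
    rintro _ ⟨S, hS, _, rfl⟩
    exact ⟨S, by simpa using hS, rfl⟩
  obtain ⟨S, hS, hSc⟩ := Finset.exists_subset_card_eq hk
  have hne : {c : ℝ | ∃ S : Finset V, S ⊆ X ∧ S.card = k ∧ c = kCost2 w S U}.Nonempty :=
    ⟨_, S, hS, hSc, rfl⟩
  exact hne.csInf_mem hfin

/-- One removal step, compared with an arbitrary set `O` of `k` centers: averaging the cost
increases over the points of `S` that are not the chosen nearest point of any `o ∈ O`. -/
lemma exists_erase_kCost2_le {V : Type*} [MetricSpace V] [DecidableEq V] (w : V → NNReal)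
    (X S O : Finset V) (k : ℕ) (hk : 1 ≤ k) (hO : O.card = k) (hS : 2 * k + 1 ≤ S.card)
    (ε : ℝ) (hε : 0 < ε) :
    ∃ c ∈ S, kCost2 w (S.erase c) X ≤
      (1 + 3 * ε / k) * kCost2 w S X + (4 + 2 / ε) / k * kCost2 w O X := by
  have hSne : S.Nonempty := Finset.card_pos.1 (by omega)
  have hOne : O.Nonempty := Finset.card_pos.1 (by omega)
  choose f hfS hf using fun x : V => exists_dist_eq_distToSet x hSne
  choose g hgO hg using fun x : V => exists_dist_eq_distToSet x hOne
  set T := O.image f with hT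
  have hTk : T.card ≤ k := hO ▸ Finset.card_image_le
  have hcard : k ≤ (S \ T).card := by
    have := Finset.le_card_sdiff T S
    omega
  have hk0 : (0 : ℝ) < k := by exact_mod_cast hk
  set A : V → ℝ := fun x => (4 + 2 / ε) * distToSet x O ^ 2 + 2 * ε * distToSet x S ^ 2 with hA
  have hA0 : ∀ x, 0 ≤ A x := fun x => by positivity
  set B : ℝ := ∑ x ∈ X, (w x : ℝ) * A x with hB
  have hB0 : 0 ≤ B := Finset.sum_nonneg fun x _ => mul_nonneg (w x).2 (hA0 x)
  have hBeq : B = (4 + 2 / ε) * kCost2 w O X + 2 * ε * kCost2 w S X := by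
    simp only [hB, hA, kCost2, Finset.mul_sum, ← Finset.sum_add_distrib]
    exact Finset.sum_congr rfl fun x _ => by ring
  have hpt : ∀ c ∈ S \ T, ∀ x, distToSet x (S.erase c) ^ 2 ≤
      distToSet x S ^ 2 + if f x = c then A x else 0 := by
    intro c hc x
    obtain ⟨-, hcT⟩ := Finset.mem_sdiff.1 hc
    have h0 := distToSet_nonneg x (S.erase c)
    split_ifs with hfx
    · -- `x` is rerouted to the point of `T` assigned to its nearest center in `O`.
      have hne : f (g x) ≠ c := fun h => hcT (h ▸ Finset.mem_image_of_mem f (hgO x))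
      have h1 := distToSet_le x (Finset.mem_erase.2 ⟨hne, hfS (g x)⟩)
      have h2 := distToSet_le (g x) (hfS x)
      have h3 := dist_triangle x (g x) (f (g x))
      have h4 := dist_triangle (g x) x (f x)
      rw [dist_comm (g x) x] at h4
      rw [hf (g x)] at h3
      rw [hf x, hg x] at h4
      rw [hg x] at h3
      have h5 : distToSet x (S.erase c) ≤ 2 * distToSet x O + distToSet x S := by linarith
      have h6 := pow_le_pow_left₀ h0 h5 2
      have h7 : 0 ≤ 2 / ε * (distToSet x O - ε * distToSet x S) ^ 2 := by positivity
      have h8 : 2 / ε * (distToSet x O - ε * distToSet x S) ^ 2 =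
          2 / ε * distToSet x O ^ 2 - 4 * distToSet x O * distToSet x S
            + 2 * ε * distToSet x S ^ 2 := by
        field_simp
        ring
      simp only [hA]
      nlinarith
    · have h1 := distToSet_le x (Finset.mem_erase.2 ⟨hfx, hfS x⟩)
      rw [hf x] at h1
      simpa using pow_le_pow_left₀ h0 h1 2
  have hcost : ∀ c ∈ S \ T, kCost2 w (S.erase c) X - kCost2 w S X ≤
      ∑ x ∈ X, if f x = c then (w x : ℝ) * A x else 0 := by
    intro c hc
    rw [kCost2, kCost2, ← Finset.sum_sub_distrib]
    refine Finset.sum_le_sum fun x _ => ?_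
    have := mul_le_mul_of_nonneg_left (hpt c hc x) (w x).2
    rw [mul_add, mul_ite, mul_zero] at this
    linarith!
  have hsum : ∑ c ∈ S \ T, (kCost2 w (S.erase c) X - kCost2 w S X) ≤ B := by
    refine (Finset.sum_le_sum hcost).trans ?_
    rw [Finset.sum_comm]
    refine Finset.sum_le_sum fun x _ => ?_
    rw [Finset.sum_ite_eq]
    split_ifs
    · exact le_rfl
    · exact mul_nonneg (w x).2 (hA0 x)
  have hne : (S \ T).Nonempty := Finset.card_pos.1 (by omega)
  obtain ⟨c, hc, hle⟩ := Finset.exists_le_of_sum_le (g := fun _ => B / k) hne (by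
    refine hsum.trans ?_
    rw [Finset.sum_const, nsmul_eq_mul, mul_div_assoc', le_div_iff₀ hk0, mul_comm B]
    exact mul_le_mul_of_nonneg_right (by exact_mod_cast hcard) hB0)
  refine ⟨c, (Finset.mem_sdiff.1 hc).1, ?_⟩
  have h1 : B / k = (4 + 2 / ε) / k * kCost2 w O X + 2 * ε / k * kCost2 w S X := by
    rw [hBeq]
    ring
  have h2 : 0 ≤ ε / k * kCost2 w S X := mul_nonneg (by positivity) (kCost2_nonneg w S X)
  have h3 : 3 * ε / k * kCost2 w S X =
      2 * ε / k * kCost2 w S X + ε / k * kCost2 w S X := by ring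
  linarith

/-- Iterating the removal step `n` times, with the accumulated additive error summed as a
geometric series. -/
lemma exists_subset_kCost2_le {V : Type*} [MetricSpace V] (w : V → NNReal)
    (X R O : Finset V) (k : ℕ) (hk : 1 ≤ k) (hO : O.card = k) (ε : ℝ) (hε : 0 < ε) (n : ℕ)
    (hn : n + 2 * k ≤ R.card) :
    ∃ S : Finset V, S ⊆ R ∧ S.card + n = R.card ∧
      kCost2 w S X ≤ (1 + 3 * ε / k) ^ n * kCost2 w R X +
        (((1 + 3 * ε / k) ^ n - 1) / (3 * ε / k)) * ((4 + 2 / ε) / k) * kCost2 w O X := by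
  classical
  induction n with
  | zero => exact ⟨R, subset_rfl, rfl, by simp⟩
  | succ n ih =>
    obtain ⟨S, hSR, hSc, hS⟩ := ih (by omega)
    obtain ⟨c, hc, hle⟩ := exists_erase_kCost2_le w X S O k hk hO (by omega) ε hε
    refine ⟨S.erase c, (Finset.erase_subset _ _).trans hSR, ?_, hle.trans ?_⟩
    · have := Finset.card_erase_add_one hc
      omega
    · have hk0 : (0 : ℝ) < k := by exact_mod_cast hk
      have ha : 0 < 3 * ε / k := by positivity
      generalize 3 * ε / (k : ℝ) = a at *
      have h1 := mul_le_mul_of_nonneg_left hS (show 0 ≤ 1 + a by linarith)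
      have h2 : ((1 + a) ^ (n + 1) - 1) / a = (1 + a) * (((1 + a) ^ n - 1) / a) + 1 := by
        field_simp
        ring
      rw [h2, pow_succ]
      linarith

/-- Restricted reverse greedy guarantee for `k`-means: there is `S ⊆ R` with `|S| = 2k` and
`cost(S, X) ≤ (1 + 3ε/k)^{m−2k} · cost(R, X)
  + (((1 + 3ε/k)^{m−2k} − 1)/(3ε/k)) · ((4 + 2/ε)/k) · OPT_k(X)`. -/
theorem restricted_reverse_greedy_kmeans {V : Type*} [Fintype V] [MetricSpace V]
    (w : V → NNReal) (X : Finset V) (hX : X.Nonempty) (k : ℕ) (hk : 1 ≤ k)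
    (R : Finset V) (hRX : R ⊆ X) (m : ℕ) (hm : R.card = m)
    (hm1 : 2 * k + 1 ≤ m) (hm2 : m ≤ 4 * k)
    (ε : ℝ) (hε0 : 0 < ε) (hε1 : ε < 1) :
    ∃ S : Finset V, S ⊆ R ∧ S.card = 2 * k ∧
      kCost2 w S X ≤ (1 + 3 * ε / k) ^ (m - 2 * k) * kCost2 w R X +
        (((1 + 3 * ε / k) ^ (m - 2 * k) - 1) / (3 * ε / k)) * ((4 + 2 / ε) / k) *
          kOPT2 w k X X := by
  obtain ⟨O, -, hOc, hO⟩ := exists_kCost2_eq_kOPT2 w k X X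
    (by have := Finset.card_le_card hRX; omega)
  obtain ⟨S, hSR, hSc, hS⟩ :=
    exists_subset_kCost2_le w X R O k hk hOc ε hε0 (m - 2 * k) (by omega)
  exact ⟨S, hSR, by omega, hO ▸ hS⟩
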